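/- arXiv:1607.05132 — 5 statements merged into one kernel-verified Lean document; each statement's English description precedes it below -/
import Mathlib

section
/- There exists a universal constant C > 0 such that the following holds for all integers k ≥ 2 and L ≥ 1. Consider any process on an initially empty collection of k piles of stones that proceeds in rounds as follows: in each round, a pile currently holding the maximum number of stones among the remaining piles is removed (together with all stones it contains), and then a total of at most L new stones are distributed arbitrarily among the remaining piles; the process ends when no pile remains. Then at every point during the process, every pile holds at most C·L·log k stones. -/
/-- There is a universal constant `C > 0` such that for all `k ≥ 2`, `L ≥ 1`,
in any run of the following process on `k` initially empty piles — in each round `r` a pile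
`m r` holding the maximum number of stones among the active piles `A r` is removed, and then
at most `L` new stones are distributed arbitrarily among the remaining piles — every pile
always holds at most `C * L * log k` stones. -/
theorem stmt1 :
    ∃ C : ℝ, 0 < C ∧
      ∀ (k L : ℕ), 2 ≤ k → 1 ≤ L →
        ∀ (A : ℕ → Finset (Fin k)) (c d : ℕ → Fin k → ℕ) (m : ℕ → Fin k),
          A 0 = Finset.univ →
          (∀ i, c 0 i = 0) →
          (∀ r, r < k → m r ∈ A r) →
          (∀ r, r < k → ∀ i ∈ A r, c r i ≤ c r (m r)) →
          (∀ r, r < k → A (r + 1) = A r \ {m r}) →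
          (∀ r, r < k → ∑ i ∈ A (r + 1), d r i ≤ L) →
          (∀ r, r < k → ∀ i ∈ A (r + 1), c (r + 1) i = c r i + d r i) →
          ∀ r, r ≤ k → ∀ i ∈ A r, (c r i : ℝ) ≤ C * (L : ℝ) * Real.log (k : ℝ) := by
  refine ⟨3, by norm_num, ?_⟩
  intro k L hk hL A c d m _ hc0 hm hmax hA hd hc
  have key : ∀ r, r ≤ k → ∀ S : Finset (Fin k), S ⊆ A r → S.Nonempty →
      ∑ i ∈ S, (c r i : ℝ) ≤
        (S.card : ℝ) * L * ∑ t ∈ Finset.range r, ((S.card : ℝ) + t)⁻¹ := by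
    intro r
    induction r with
    | zero => intro _ S _ _; simp [hc0]
    | succ r ih =>
      intro hr S hS hne
      have hr' : r < k := hr
      have hmS : m r ∉ S := fun h => by
        have := hS h
        rw [hA r hr'] at this
        simp at this
      have hSA : S ⊆ A r := fun x hx => by
        have := hS hx
        rw [hA r hr'] at this
        exact (Finset.mem_sdiff.1 this).1
      have h1 := ih hr'.le (insert (m r) S)
        (Finset.insert_subset (hm r hr') hSA) (Finset.insert_nonempty _ _)
      rw [Finset.sum_insert hmS, Finset.card_insert_of_notMem hmS] at h1
      push_cast at h1
      have h2 : ∑ i ∈ S, (c r i : ℝ) ≤ (S.card : ℝ) * c r (m r) := by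
        have := Finset.sum_le_card_nsmul S (fun i => (c r i : ℝ)) (c r (m r))
          (fun i hi => by exact_mod_cast hmax r hr' i (hSA hi))
        simpa using this
      have h3 : ∑ i ∈ S, (d r i : ℝ) ≤ L := by
        have : ∑ i ∈ S, d r i ≤ L :=
          (Finset.sum_le_sum_of_subset hS).trans (hd r hr')
        exact_mod_cast this
      have h4 : ∑ i ∈ S, (c (r + 1) i : ℝ) = ∑ i ∈ S, (c r i : ℝ) + ∑ i ∈ S, (d r i : ℝ) := by
        rw [← Finset.sum_add_distrib]
        refine Finset.sum_congr rfl fun i hi => ?_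
        rw [hc r hr' i (hS hi)]
        push_cast
        rfl
      have hj : (0 : ℝ) < S.card := by exact_mod_cast hne.card_pos
      rw [Finset.sum_range_succ', h4]
      have h5 : ∑ t ∈ Finset.range r, ((S.card : ℝ) + ((t + 1 : ℕ) : ℝ))⁻¹
          = ∑ t ∈ Finset.range r, ((S.card : ℝ) + 1 + t)⁻¹ := by
        refine Finset.sum_congr rfl fun t _ => ?_
        push_cast
        congr 1
        ring
      rw [h5]
      generalize ∑ t ∈ Finset.range r, ((S.card : ℝ) + 1 + t)⁻¹ = H at *
      generalize ∑ i ∈ S, (c r i : ℝ) = X at *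
      generalize (S.card : ℝ) = j at *
      have h6 : X ≤ j * L * H := by
        have h7 : (j + 1) * X ≤ (j + 1) * (j * L * H) := by
          nlinarith [mul_le_mul_of_nonneg_left h1 hj.le]
        exact le_of_mul_le_mul_left h7 (by linarith)
      have h8 : j * L * (H + (j + ((0 : ℕ) : ℝ))⁻¹) = j * L * H + L := by
        simp only [Nat.cast_zero, add_zero]
        field_simp
      rw [h8]
      linarith
  intro r hr i hi
  have h := key r hr {i} (by simpa using hi) (by simp)
  simp only [Finset.sum_singleton, Finset.card_singleton, Nat.cast_one, one_mul] at h
  have h1 : ∑ t ∈ Finset.range r, ((1 : ℝ) + t)⁻¹ ≤ ∑ t ∈ Finset.range k, ((1 : ℝ) + t)⁻¹ :=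
    Finset.sum_le_sum_of_subset_of_nonneg (Finset.range_mono hr) (fun t _ _ => by positivity)
  have h2 : ∑ t ∈ Finset.range k, ((1 : ℝ) + t)⁻¹ ≤ 1 + Real.log k := by
    have := harmonic_le_one_add_log k
    simpa [harmonic, add_comm] using this
  have h3 : Real.log 2 ≤ Real.log k :=
    Real.log_le_log (by norm_num) (by exact_mod_cast hk)
  have h4 := Real.log_two_gt_d9
  have h5 : ∑ t ∈ Finset.range r, ((1 : ℝ) + t)⁻¹ ≤ 3 * Real.log k := by linarith
  calc (c r i : ℝ) ≤ _ := h
    _ ≤ L * (3 * Real.log k) := by gcongr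
    _ = _ := by ring
end

section
/- Let G = (V, E) be a finite directed graph with nonnegative edge weights, let v ∈ V, let h ≥ 1 be an integer, and let D ⊆ V with v ∉ D. For every node x for which some path from x to v with at most h hops exists in G, fix a path π(x) from x to v that attains dist^h_G(x, v) and, among all ≤h-hop paths from x to v of length dist^h_G(x, v), has the minimum number of hops. Let U = {x ∈ V\D : π(x) is defined and contains a node of D}. Let H be the graph on node set V\D, with edge weights inherited from G, whose edge set consists of: all edges of G\D leaving a node of U; and, for every node y ∈ (V\D)\U with π(x) defined and y ≠ v, the first edge of π(y). Then for every node s ∈ V\D such that dist_{G\D}(s, v) is attained by a path with at most h hops in G\D, it holds that dist_H(s, v) = dist_{G\D}(s, v). -/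
/-- `IsWalk E l s t`: the nonempty list `l` is the node sequence of a walk from `s` to `t`
in the directed graph with edge relation `E`. -/
def IsWalk {V : Type*} (E : V → V → Prop) (l : List V) (s t : V) : Prop :=
  l ≠ [] ∧ l.head? = some s ∧ l.getLast? = some t ∧ l.Chain' E

/-- The length (total weight) of a walk with node sequence `l` under edge weights `w`. -/
def walkLen {V : Type*} (w : V → V → ℝ) (l : List V) : ℝ :=
  ((l.zip l.tail).map fun e => w e.1 e.2).sum

/-- `edist E w s t`: the distance from `s` to `t`, i.e. the infimum of the lengths of all
walks from `s` to `t` (`⊤` if there is none). -/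
noncomputable def edist {V : Type*} (E : V → V → Prop) (w : V → V → ℝ) (s t : V) : EReal :=
  sInf {x : EReal | ∃ l : List V, IsWalk E l s t ∧ x = (walkLen w l : ℝ)}

/-- `hdist E w h s t`: the `≤ h` hop distance from `s` to `t`, i.e. the infimum of the lengths
of all walks from `s` to `t` with at most `h` edges (`⊤` if there is none). -/
noncomputable def hdist {V : Type*} (E : V → V → Prop) (w : V → V → ℝ) (h : ℕ) (s t : V) :
    EReal :=
  sInf {x : EReal | ∃ l : List V, IsWalk E l s t ∧ l.length ≤ h + 1 ∧ x = (walkLen w l : ℝ)}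

theorem IsWalk.cases_aux {V : Type*} {E : V → V → Prop} {l : List V} {s t : V}
    (hl : IsWalk E l s t) :
    (l = [s] ∧ s = t) ∨ ∃ z l', l = s :: l' ∧ E s z ∧ IsWalk E l' z t := by
  obtain ⟨h0, h1, h2, h3⟩ := hl
  match l, h0, h1, h2, h3 with
  | [a], _, h1, h2, _ =>
    simp at h1 h2
    subst h1; subst h2; simp
  | a :: b :: r, _, h1, h2, h3 =>
    right
    simp at h1
    subst h1
    refine ⟨b, b :: r, rfl, ?_, ?_, ?_, ?_, ?_⟩
    · exact (List.isChain_cons_cons.1 h3).1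
    · simp
    · simp
    · simpa using h2
    · exact (List.isChain_cons_cons.1 h3).2

theorem IsWalk.cons_aux {V : Type*} {E : V → V → Prop} {l : List V} {s z t : V}
    (hl : IsWalk E l z t) (hs : E s z) : IsWalk E (s :: l) s t := by
  obtain ⟨h0, h1, h2, h3⟩ := hl
  match l, h0, h1, h2, h3 with
  | b :: r, _, h1, h2, h3 =>
    simp at h1
    subst h1
    refine ⟨by simp, by simp, by simpa using h2, List.isChain_cons_cons.2 ⟨hs, h3⟩⟩

theorem IsWalk.head_aux {V : Type*} {E : V → V → Prop} {l : List V} {z t : V}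
    (hl : IsWalk E l z t) : l.head? = some z := hl.2.1

theorem IsWalk.single_aux {V : Type*} (E : V → V → Prop) (s : V) : IsWalk E [s] s s := by
  refine ⟨by simp, by simp, by simp, List.isChain_singleton _⟩

theorem walkLen_single_aux {V : Type*} (w : V → V → ℝ) (s : V) : walkLen w [s] = 0 := by
  simp [walkLen]

theorem IsWalk.walkLen_cons_aux {V : Type*} {E : V → V → Prop} (w : V → V → ℝ)
    {l : List V} {s z t : V}
    (hl : IsWalk E l z t) : walkLen w (s :: l) = w s z + walkLen w l := by
  obtain ⟨h0, h1, h2, h3⟩ := hl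
  match l, h0, h1 with
  | b :: r, _, h1 =>
    simp at h1
    subst h1
    simp [walkLen]

theorem IsWalk.imp_aux {V : Type*} {E F : V → V → Prop} {l : List V} {s t : V}
    (hl : IsWalk E l s t) (hEF : ∀ a b, a ∈ l → b ∈ l → E a b → F a b) : IsWalk F l s t := by
  induction l generalizing s with
  | nil => exact absurd rfl hl.1
  | cons a r ih =>
    rcases hl.cases_aux with ⟨h1, h2⟩ | ⟨z, l', h1, h2, h3⟩
    · rw [h1, ← h2]; exact IsWalk.single_aux F s
    · obtain ⟨rfl, rfl⟩ := List.cons.inj h1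
      have hz : z ∈ r := List.mem_of_mem_head? (by rw [h3.head_aux]; rfl)
      exact (ih h3 fun x y hx hy => hEF x y (by simp [hx]) (by simp [hy])).cons_aux
        (hEF _ _ (by simp) (by simp [hz]) h2)

theorem IsWalk.nonneg_aux {V : Type*} {E : V → V → Prop} {w : V → V → ℝ}
    (hw : ∀ u z, E u z → 0 ≤ w u z) {l : List V} {s t : V}
    (hl : IsWalk E l s t) : 0 ≤ walkLen w l := by
  induction l generalizing s with
  | nil => exact absurd rfl hl.1
  | cons a r ih =>
    rcases hl.cases_aux with ⟨h1, h2⟩ | ⟨z, l', h1, h2, h3⟩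
    · rw [h1, walkLen_single_aux]
    · obtain ⟨rfl, rfl⟩ := List.cons.inj h1
      rw [h3.walkLen_cons_aux]
      exact add_nonneg (hw _ _ h2) (ih h3)

/-- The sketch graph `H` (edge relation `EH`) built from the fixed
minimum-hop shortest `≤ h`-hop paths `π x` to `v` preserves, for every source `s ∉ D` whose
distance to `v` in `G \ D` (edge relation `ED`) is attained by a walk with at most `h` hops,
the exact distance: `dist_H (s, v) = dist_{G \ D} (s, v)`. -/
theorem stmt2 {V : Type} [Fintype V] [DecidableEq V]
    (E : V → V → Prop) (w : V → V → ℝ) (hw : ∀ u z, E u z → 0 ≤ w u z)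
    (v : V) (h : ℕ) (hh : 1 ≤ h) (D : Set V) (hv : v ∉ D)
    (π : V → List V)
    -- for every `x` admitting a `≤ h`-hop walk to `v`, `π x` is a shortest `≤ h`-hop walk
    -- from `x` to `v` having the minimum number of hops among such shortest walks
    (hπ : ∀ x : V, (∃ l, IsWalk E l x v ∧ l.length ≤ h + 1) →
      IsWalk E (π x) x v ∧ (π x).length ≤ h + 1 ∧
      (∀ l, IsWalk E l x v → l.length ≤ h + 1 → walkLen w (π x) ≤ walkLen w l) ∧
      (∀ l, IsWalk E l x v → l.length ≤ h + 1 → walkLen w l = walkLen w (π x) →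
        (π x).length ≤ l.length))
    -- `U` is the set of affected nodes: nodes outside `D` whose fixed path meets `D`
    (U : Set V)
    (hU : U = {x : V | x ∉ D ∧ (∃ l, IsWalk E l x v ∧ l.length ≤ h + 1) ∧ ∃ d ∈ D, d ∈ π x})
    -- `EH` is the edge relation of the sketch graph `H` on the node set `V \ D`
    (EH : V → V → Prop)
    (hEH : ∀ u z, EH u z ↔ u ∉ D ∧ z ∉ D ∧
      ((u ∈ U ∧ E u z) ∨
        (u ∉ U ∧ (∃ l, IsWalk E l u v ∧ l.length ≤ h + 1) ∧ u ≠ v ∧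
          (π u).tail.head? = some z)))
    -- `ED` is the edge relation of the induced subgraph `G \ D`
    (ED : V → V → Prop) (hED : ∀ u z, ED u z ↔ E u z ∧ u ∉ D ∧ z ∉ D) :
    ∀ s : V, s ∉ D →
      (∃ l, IsWalk ED l s v ∧ l.length ≤ h + 1 ∧ (walkLen w l : EReal) = edist ED w s v) →
      edist EH w s v = edist ED w s v := by
  have hEDE : ∀ {l a b}, IsWalk ED l a b → IsWalk E l a b := fun hl =>
    hl.imp_aux fun a b _ _ hab => ((hED a b).1 hab).1
  have hHD : ∀ u z, EH u z → ED u z := by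
    intro u z huz
    obtain ⟨hu, hz, h1 | ⟨h1, h2, h3, h4⟩⟩ := (hEH u z).1 huz
    · exact (hED _ _).2 ⟨h1.2, hu, hz⟩
    · refine (hED _ _).2 ⟨?_, hu, hz⟩
      rcases (hπ u h2).1.cases_aux with ⟨_, h6⟩ | ⟨z', l', h5, h6, h7⟩
      · exact absurd h6 h3
      · rw [h5, List.tail_cons, h7.head_aux] at h4
        cases h4
        exact h6
  have key : ∀ n, ∀ s P, s ∉ D → IsWalk ED P s v → P.length ≤ n → n ≤ h + 1 →
      (∀ Q, IsWalk ED Q s v → walkLen w P ≤ walkLen w Q) →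
      ∃ Q, IsWalk EH Q s v ∧ walkLen w Q ≤ walkLen w P := by
    intro n
    induction n with
    | zero =>
      intro s P _ hP hn
      exact absurd (List.length_eq_zero_iff.1 (by omega)) hP.1
    | succ n ih =>
      intro s P hs hP hPn hn hopt
      by_cases hsv : s = v
      · subst hsv
        exact ⟨[s], IsWalk.single_aux _ _, by
          rw [walkLen_single_aux]; exact (hEDE hP).nonneg_aux hw⟩
      have step : ∀ P, IsWalk ED P s v → P.length ≤ n + 1 →
          (∀ Q, IsWalk ED Q s v → walkLen w P ≤ walkLen w Q) →
          (∀ z, ED s z → P.tail.head? = some z → EH s z) →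
          ∃ Q, IsWalk EH Q s v ∧ walkLen w Q ≤ walkLen w P := by
        intro P hP hPn hopt hedge
        rcases hP.cases_aux with ⟨_, h6⟩ | ⟨z, l', rfl, h6, h7⟩
        · exact absurd h6 hsv
        · obtain ⟨Q, hQ, hQl⟩ := ih z l' ((hED _ _).1 h6).2.2 h7
            (by simpa using hPn) (by omega) (by
              intro Q hQ
              have := hopt _ (hQ.cons_aux h6)
              rw [h7.walkLen_cons_aux, hQ.walkLen_cons_aux] at this
              linarith)
          refine ⟨s :: Q, hQ.cons_aux (hedge z h6 (by simpa using h7.head_aux)), ?_⟩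
          rw [h7.walkLen_cons_aux, hQ.walkLen_cons_aux]
          linarith
      have hex : ∃ l, IsWalk E l s v ∧ l.length ≤ h + 1 := ⟨P, hEDE hP, by omega⟩
      by_cases hsU : s ∈ U
      · refine step P hP hPn hopt fun z hz _ => ?_
        have := (hED _ _).1 hz
        exact (hEH _ _).2 ⟨hs, this.2.2, Or.inl ⟨hsU, this.1⟩⟩
      · obtain ⟨hp1, hp2, hp3, hp4⟩ := hπ s hex
        have hav : ∀ d ∈ π s, d ∉ D := by
          intro d hd hdD
          exact hsU (by rw [hU]; exact ⟨hs, hex, d, hdD, hd⟩)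
        have hpD : IsWalk ED (π s) s v :=
          hp1.imp_aux fun a b ha hb hab => (hED _ _).2 ⟨hab, hav a ha, hav b hb⟩
        have hle := hp3 P (hEDE hP) (by omega)
        have hlen := hp4 P (hEDE hP) (by omega) (le_antisymm (hopt _ hpD) hle)
        obtain ⟨Q, hQ, hQl⟩ := step (π s) hpD (by omega)
          (fun Q hQ => hle.trans (hopt Q hQ)) (fun z hz hz' =>
            (hEH _ _).2 ⟨hs, ((hED _ _).1 hz).2.2, Or.inr ⟨hsU, hex, hsv, hz'⟩⟩)
        exact ⟨Q, hQ, hQl.trans hle⟩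
  rintro s hs ⟨P, hP, hPh, hPd⟩
  apply le_antisymm
  · obtain ⟨Q, hQ, hQl⟩ := key (h + 1) s P hs hP hPh le_rfl (by
      intro Q hQ
      have : (walkLen w P : EReal) ≤ (walkLen w Q : EReal) := by
        rw [hPd]; exact sInf_le ⟨Q, hQ, rfl⟩
      exact_mod_cast this)
    rw [← hPd]
    have h1 : edist EH w s v ≤ (walkLen w Q : EReal) := sInf_le ⟨Q, hQ, rfl⟩
    exact h1.trans (EReal.coe_le_coe_iff.2 hQl)
  · apply sInf_le_sInf
    rintro x ⟨l, hl, rfl⟩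
    exact ⟨l, hl.imp_aux fun a b _ _ hab => hHD a b hab, rfl⟩
end

section
/- Let n ≥ 2, let c ≥ 1 be a real number, let h ≥ 2, and let G be a directed graph on n nodes with nonnegative edge weights in which, for every ordered pair of nodes (s, t) with t reachable from s, a designated simple shortest path from s to t is fixed. Let C be the random set of nodes obtained by including each of the n nodes independently with probability min(x/(h/2), 1), where x = 3c·ln n + 1. Then with probability at least 1 − 1/n^c, every designated shortest path consisting of at least h/2 edges contains a node of C. -/
open MeasureTheory

/-- The Bernoulli measure on `Bool` with success probability `p`. -/
noncomputable def bern (p : ℝ) : Measure Bool :=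
  (ENNReal.ofReal p) • Measure.dirac true + (ENNReal.ofReal (1 - p)) • Measure.dirac false

lemma bern_isProb (p : ℝ) (h0 : 0 ≤ p) (h1 : p ≤ 1) : IsProbabilityMeasure (bern p) := by
  constructor
  simp only [bern, Measure.add_apply, Measure.smul_apply, measure_univ, smul_eq_mul, mul_one]
  rw [← ENNReal.ofReal_add h0 (by linarith)]
  simp

lemma bern_false (p : ℝ) : bern p {false} = ENNReal.ofReal (1 - p) := by
  simp [bern]

lemma pi_all_false {V : Type} [Fintype V] [DecidableEq V] (p : ℝ) (h0 : 0 ≤ p) (h1 : p ≤ 1)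
    (L : List V) (hL : L.Nodup) :
    (Measure.pi fun _ : V => bern p) {ω : V → Bool | ∀ u ∈ L, ω u = false}
      = ENNReal.ofReal ((1 - p) ^ L.length) := by
  haveI := bern_isProb p h0 h1
  have hs : {ω : V → Bool | ∀ u ∈ L, ω u = false}
      = Set.pi Set.univ (fun u => if u ∈ L.toFinset then ({false} : Set Bool) else Set.univ) := by
    ext ω
    simp only [Set.mem_setOf_eq, Set.mem_pi, Set.mem_univ, true_implies, List.mem_toFinset]
    refine forall_congr' fun u => ?_
    by_cases hu : u ∈ L <;> simp [hu]
  rw [hs, Measure.pi_pi]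
  have : ∀ u : V, bern p (if u ∈ L.toFinset then ({false} : Set Bool) else Set.univ)
      = if u ∈ L.toFinset then ENNReal.ofReal (1 - p) else 1 := by
    intro u
    split_ifs
    · exact bern_false p
    · exact measure_univ
  simp only [this]
  rw [Finset.prod_ite_mem, Finset.univ_inter, Finset.prod_const, List.toFinset_card_of_nodup hL,
    ENNReal.ofReal_pow (by linarith)]

lemma miss_bound (n : ℕ) (hn : 2 ≤ n) (c : ℝ) (hc : 1 ≤ c) (H : ℝ) (hH : 1 ≤ H) (x : ℝ)
    (hx : x = 3 * c * Real.log (n : ℝ) + 1) (k : ℕ) (hk : H ≤ k) :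
    (1 - min (x / H) 1) ^ k ≤ (n : ℝ) ^ (-(3 * c)) := by
  have hn0 : (0 : ℝ) < n := by positivity
  by_cases h1 : 1 ≤ x / H
  · rw [min_eq_right h1]
    have hk0 : k ≠ 0 := by
      rintro rfl
      norm_num at hk
      linarith
    rw [sub_self, zero_pow hk0]
    positivity
  · push Not at h1
    rw [min_eq_left h1.le]
    have hlog : 0 ≤ Real.log n := Real.log_nonneg (by exact_mod_cast (by omega : 1 ≤ n))
    have hx0 : 0 ≤ x := by rw [hx]; positivity
    have hxH : 0 ≤ x / H := by positivity
    calc (1 - x / H) ^ k ≤ (Real.exp (-(x / H))) ^ k := by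
          gcongr
          exact Real.one_sub_le_exp_neg _
      _ = Real.exp (-(x / H * k)) := by rw [← Real.exp_nat_mul]; ring_nf
      _ ≤ Real.exp (Real.log n * (-(3 * c))) := by
          apply Real.exp_le_exp.2
          have : x ≤ x / H * k := by
            calc x = x / H * H := by field_simp
              _ ≤ _ := by gcongr
          linarith
      _ = _ := (Real.rpow_def_of_pos hn0 _).symm

/-- If each of the `n` nodes is sampled independently with probability
`min (x / (h/2)) 1` where `x = 3 c ln n + 1`, then with probability at least `1 - 1/n^c`
every designated simple shortest path `P s t` with at least `h/2` edges contains a sampled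
node. -/
theorem stmt3 {V : Type} [Fintype V] [DecidableEq V]
    (n : ℕ) (hn : 2 ≤ n) (hcard : Fintype.card V = n)
    (c : ℝ) (hc : 1 ≤ c) (h : ℕ) (hh : 2 ≤ h)
    (E : V → V → Prop) (w : V → V → ℝ) (hw : ∀ u z, E u z → 0 ≤ w u z)
    -- the designated simple shortest paths, fixed for every reachable pair
    (P : V → V → List V)
    (hP : ∀ s t : V, (∃ l, IsWalk E l s t) →
      IsWalk E (P s t) s t ∧ (P s t).Nodup ∧
      ∀ l, IsWalk E l s t → walkLen w (P s t) ≤ walkLen w l)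
    (x : ℝ) (hx : x = 3 * c * Real.log (n : ℝ) + 1) :
    ENNReal.ofReal (1 - 1 / (n : ℝ) ^ c) ≤
      (Measure.pi fun _ : V => bern (min (x / ((h : ℝ) / 2)) 1))
        {ω : V → Bool |
          ∀ s t : V, (∃ l, IsWalk E l s t) →
            (h : ℝ) / 2 ≤ (((P s t).length - 1 : ℕ) : ℝ) →
            ∃ u ∈ P s t, ω u = true} := by
  set p : ℝ := min (x / ((h : ℝ) / 2)) 1 with hp
  have hh' : (2 : ℝ) ≤ h := by exact_mod_cast hh
  have hn0 : (0 : ℝ) < n := by positivity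
  have hn1 : (1 : ℝ) ≤ n := by exact_mod_cast (by omega : 1 ≤ n)
  have hlog : 0 ≤ Real.log n := Real.log_nonneg hn1
  have hx0 : 0 ≤ x := by rw [hx]; positivity
  have hp0 : 0 ≤ p := le_min (by positivity) zero_le_one
  have hp1 : p ≤ 1 := min_le_right _ _
  haveI := bern_isProb p hp0 hp1
  set μ : Measure (V → Bool) := Measure.pi fun _ : V => bern p with hμ
  set A : Set (V → Bool) := {ω : V → Bool |
          ∀ s t : V, (∃ l, IsWalk E l s t) →
            (h : ℝ) / 2 ≤ (((P s t).length - 1 : ℕ) : ℝ) →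
            ∃ u ∈ P s t, ω u = true} with hA
  let B : V × V → Set (V → Bool) := fun q => {ω | (∃ l, IsWalk E l q.1 q.2) ∧
    (h : ℝ) / 2 ≤ (((P q.1 q.2).length - 1 : ℕ) : ℝ) ∧ ∀ u ∈ P q.1 q.2, ω u = false}
  have hsub : Aᶜ ⊆ ⋃ q, B q := by
    intro ω hω
    simp only [hA, Set.mem_compl_iff, Set.mem_setOf_eq] at hω
    push Not at hω
    obtain ⟨s, t, hw1, hw2, hw3⟩ := hω
    refine Set.mem_iUnion.2 ⟨(s, t), hw1, hw2, fun u hu => ?_⟩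
    simpa using hw3 u hu
  have hB : ∀ q, μ (B q) ≤ ENNReal.ofReal ((n : ℝ) ^ (-(3 * c))) := by
    intro q
    by_cases hq : (∃ l, IsWalk E l q.1 q.2) ∧
        (h : ℝ) / 2 ≤ (((P q.1 q.2).length - 1 : ℕ) : ℝ)
    · calc μ (B q) ≤ μ {ω : V → Bool | ∀ u ∈ P q.1 q.2, ω u = false} :=
            measure_mono fun ω hω => hω.2.2
        _ = ENNReal.ofReal ((1 - p) ^ (P q.1 q.2).length) :=
            pi_all_false p hp0 hp1 _ (hP _ _ hq.1).2.1
        _ ≤ _ := by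
            apply ENNReal.ofReal_le_ofReal
            refine miss_bound n hn c hc _ (by linarith) x hx _ (hq.2.trans ?_)
            exact_mod_cast Nat.sub_le _ _
    · have : B q = ∅ := by
        ext ω
        simp only [Set.mem_empty_iff_false, iff_false]
        exact fun hω => hq ⟨hω.1, hω.2.1⟩
      simp [this]
  have hbad : μ Aᶜ ≤ ENNReal.ofReal (1 / (n : ℝ) ^ c) := by
    calc μ Aᶜ ≤ μ (⋃ q, B q) := measure_mono hsub
      _ ≤ ∑ q, μ (B q) := measure_iUnion_fintype_le _ _
      _ ≤ ∑ _q : V × V, ENNReal.ofReal ((n : ℝ) ^ (-(3 * c))) := Finset.sum_le_sum fun q _ => hB q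
      _ = ENNReal.ofReal ((n : ℝ) ^ (2 : ℝ) * (n : ℝ) ^ (-(3 * c))) := by
          rw [Finset.sum_const, Finset.card_univ, Fintype.card_prod, hcard, nsmul_eq_mul,
            ENNReal.ofReal_mul (by positivity)]
          congr 1
          rw [Real.rpow_two, sq, ← ENNReal.ofReal_natCast]
          push_cast
          rfl
      _ ≤ _ := by
          apply ENNReal.ofReal_le_ofReal
          rw [← Real.rpow_add hn0, one_div, ← Real.rpow_neg hn0.le]
          exact Real.rpow_le_rpow_of_exponent_le hn1 (by linarith)
  have hmeas : MeasurableSet A := (Set.toFinite A).measurableSet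
  have hadd : μ A + μ Aᶜ = 1 := by rw [measure_add_measure_compl hmeas, measure_univ]
  rw [ENNReal.ofReal_sub _ (by positivity), ENNReal.ofReal_one, ← hadd]
  exact tsub_le_iff_right.2 (by gcongr)
end

section
/- Let G = (V, E) be a finite directed graph with real edge weights w. There exists a potential function for G, i.e., a function p : V → ℝ such that w(u, v) + p(u) − p(v) ≥ 0 for every edge (u, v) ∈ E, if and only if G contains no cycle of negative total weight. -/
theorem walkLen_single {V : Type*} (w : V → V → ℝ) (a : V) : walkLen w [a] = 0 := by
  simp [walkLen]

theorem walkLen_cons {V : Type*} (w : V → V → ℝ) (a b : V) (l : List V) :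
    walkLen w (a :: b :: l) = w a b + walkLen w (b :: l) := by
  simp [walkLen]

theorem walkLen_append {V : Type*} (w : V → V → ℝ) (a : List V) (x : V) (c : List V) :
    walkLen w (a ++ x :: c) = walkLen w (a ++ [x]) + walkLen w (x :: c) := by
  induction a with
  | nil => simp [walkLen_single]
  | cons y a ih =>
    cases a with
    | nil => simp [walkLen_cons, walkLen_single]
    | cons z a =>
      simp only [List.cons_append] at ih ⊢
      rw [walkLen_cons, walkLen_cons, ih]
      ring

theorem exists_split_of_not_nodup {V : Type*} (l : List V) (h : ¬ l.Nodup) :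
    ∃ a x b c, l = a ++ x :: (b ++ x :: c) := by
  induction l with
  | nil => simp at h
  | cons y l ih =>
    by_cases hy : y ∈ l
    · obtain ⟨b, c, rfl⟩ := List.append_of_mem hy
      exact ⟨[], y, b, c, rfl⟩
    · obtain ⟨a, x, b, c, rfl⟩ := ih (fun hn => h (List.nodup_cons.2 ⟨hy, hn⟩))
      exact ⟨y :: a, x, b, c, rfl⟩

theorem walkLen_ge_pot {V : Type*} (E : V → V → Prop) (w : V → V → ℝ) (p : V → ℝ)
    (hp : ∀ u z, E u z → 0 ≤ w u z + p u - p z) (l : List V) :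
    ∀ s t, (s :: l).IsChain E → (s :: l).getLast? = some t →
      p t - p s ≤ walkLen w (s :: l) := by
  induction l with
  | nil =>
    intro s t _ h
    simp at h
    simp [h, walkLen_single]
  | cons b l ih =>
    intro s t hc h
    rw [List.isChain_cons_cons] at hc
    rw [List.getLast?_cons_cons] at h
    have h1 := ih b t hc.2 h
    have h2 := hp s b hc.1
    rw [walkLen_cons]
    linarith

theorem walkLen_ge_length {V : Type*} (w : V → V → ℝ) (B : ℝ) (h0 : 0 ≤ B)
    (hB : ∀ u v, -B ≤ w u v) (l : List V) : -(l.length * B) ≤ walkLen w l := by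
  induction l with
  | nil => simp [walkLen]
  | cons a l ih =>
    cases l with
    | nil => simp [walkLen_single, h0]
    | cons b l =>
      rw [walkLen_cons, List.length_cons]
      have := hB a b
      push_cast at ih ⊢
      linarith

theorem walkLen_bounded {V : Type*} [Fintype V] (E : V → V → Prop) (w : V → V → ℝ)
    (B : ℝ) (h0 : 0 ≤ B) (hB : ∀ u v, -B ≤ w u v)
    (hc : ∀ (l : List V) (s : V), IsWalk E l s s → 2 ≤ l.length → 0 ≤ walkLen w l) (n : ℕ) :
    ∀ l : List V, l.length = n → l.IsChain E → -(Fintype.card V * B) ≤ walkLen w l := by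
  induction n using Nat.strong_induction_on with
  | _ n ih =>
    intro l hl hch
    by_cases hn : l.Nodup
    · have h1 := walkLen_ge_length w B h0 hB l
      have h2 : (l.length : ℝ) ≤ Fintype.card V := by exact_mod_cast hn.length_le_card
      nlinarith
    · obtain ⟨a, x, b, c, rfl⟩ := exists_split_of_not_nodup l hn
      have e1 := walkLen_append w a x (b ++ x :: c)
      have e2 := walkLen_append w (x :: b) x c
      have e3 := walkLen_append w a x c
      rw [List.isChain_split] at hch
      have hch2 := hch.2
      rw [← List.cons_append, List.isChain_split] at hch2
      have hcyc := hc (x :: b ++ [x]) x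
        ⟨by simp, by simp, List.getLast?_concat, hch2.1⟩ (by simp)
      have := ih (a ++ x :: c).length (by rw [← hl]; simp) _ rfl
        (List.isChain_split.2 ⟨hch.1, hch2.2⟩)
      simp only [List.cons_append] at *
      linarith

/-- A finite directed graph with real edge weights admits a potential
function (`p` with `w u v + p u - p v ≥ 0` on every edge) if and only if it contains no
cycle of negative total weight. -/
theorem stmt7 {V : Type} [Fintype V]
    (E : V → V → Prop) (w : V → V → ℝ) :
    (∃ p : V → ℝ, ∀ u z, E u z → 0 ≤ w u z + p u - p z) ↔
    (∀ (l : List V) (s : V), IsWalk E l s s → 2 ≤ l.length → 0 ≤ walkLen w l) := by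
  constructor
  · rintro ⟨p, hp⟩ l s ⟨hne, hh, hl, hch⟩ _
    cases l with
    | nil => exact absurd rfl hne
    | cons a l =>
      simp only [List.head?_cons, Option.some.injEq] at hh
      subst hh
      have := walkLen_ge_pot E w p hp l a a hch hl
      linarith
  · intro hc
    have hB : ∃ B : ℝ, 0 ≤ B ∧ ∀ u v, -B ≤ w u v := by
      refine ⟨∑ e : V × V, |w e.1 e.2|, Finset.sum_nonneg fun _ _ => abs_nonneg _, fun u v => ?_⟩
      have h1 : |w u v| ≤ ∑ e : V × V, |w e.1 e.2| :=
        Finset.single_le_sum (f := fun e : V × V => |w e.1 e.2|)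
          (fun _ _ => abs_nonneg _) (Finset.mem_univ (u, v))
      have h2 := neg_abs_le (w u v)
      linarith
    obtain ⟨B, h0, hB⟩ := hB
    let S : V → Set ℝ := fun v =>
      {r | ∃ l : List V, l.IsChain E ∧ l.getLast? = some v ∧ walkLen w l = r}
    have hne : ∀ v, (S v).Nonempty := fun v => ⟨0, [v], by simp, by simp, walkLen_single w v⟩
    have hbd : ∀ v, BddBelow (S v) := by
      intro v
      refine ⟨-(Fintype.card V * B), ?_⟩
      rintro r ⟨l, hl, _, rfl⟩
      exact walkLen_bounded E w B h0 hB hc _ l rfl hl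
    refine ⟨fun v => sInf (S v), fun u z huz => ?_⟩
    have key : sInf (S z) - w u z ≤ sInf (S u) := by
      refine le_csInf (hne u) ?_
      rintro r ⟨l, hl, hu, rfl⟩
      obtain ⟨a, rfl⟩ := List.getLast?_eq_some_iff.1 hu
      have hm : walkLen w (a ++ [u]) + w u z ∈ S z := by
        refine ⟨a ++ u :: [z], ?_, by simp, ?_⟩
        · exact List.isChain_split.2 ⟨hl, by simpa using huz⟩
        · rw [walkLen_append, walkLen_cons, walkLen_single, add_zero]
      have := csInf_le (hbd z) hm
      linarith
    simp only
    linarith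
end

section
/- Let G be a finite directed graph with nonnegative edge weights and with a linear order on its nodes, and suppose that for every ordered pair of nodes (s, t) with t reachable from s, all shortest walks from s to t have the same (finite) number of edges. Fix a source node s, and for each node t reachable from s let λ(t) denote the lexicographically smallest shortest walk from s to t, which is well-defined and unique. Then for every node t reachable from s and every prefix ρ of λ(t) ending at a node u, it holds that ρ = λ(u). In particular, for every reachable t ≠ s, the last edge of λ(t) determines a unique predecessor pred(t), and the set of edges {(pred(t), t) : t ≠ s reachable from s} forms a tree rooted at s whose root-to-t path is λ(t) for every reachable t. -/
/-- `l` is a shortest walk from `s` to `t` under weights `w`. -/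
def IsShortestWalk {V : Type*} (E : V → V → Prop) (w : V → V → ℝ) (s t : V) (l : List V) :
    Prop :=
  IsWalk E l s t ∧ ∀ l', IsWalk E l' s t → walkLen w l ≤ walkLen w l'

theorem walkLen_append_aux {V : Type*} (w : V → V → ℝ) (p : List V) (u : V) (σ : List V) :
    walkLen w (p ++ u :: σ) = walkLen w (p ++ [u]) + walkLen w (u :: σ) := by
  induction p with
  | nil => simp [walkLen]
  | cons a p ih =>
    cases p with
    | nil => simp [walkLen]
    | cons b p =>
      simp only [walkLen, List.cons_append, List.tail_cons, List.zip_cons_cons, List.map_cons,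
        List.sum_cons] at ih ⊢
      rw [ih]; ring

theorem walkLen_nonneg_aux {V : Type*} (E : V → V → Prop) (w : V → V → ℝ)
    (hw : ∀ u z, E u z → 0 ≤ w u z) (l : List V) (h : l.IsChain E) : 0 ≤ walkLen w l := by
  induction l with
  | nil => simp [walkLen]
  | cons a p ih =>
    cases p with
    | nil => simp [walkLen]
    | cons b p =>
      rw [List.isChain_cons_cons] at h
      have h1 := ih h.2
      have h2 := hw _ _ h.1
      simp only [walkLen, List.tail_cons, List.zip_cons_cons, List.map_cons,
        List.sum_cons] at h1 ⊢
      linarith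

theorem lex_append_aux {V : Type*} [LinearOrder V] (a b σ : List V) (hl : a.length = b.length)
    (h : List.Lex (· < ·) a b) : List.Lex (· < ·) (a ++ σ) (b ++ σ) := by
  induction h with
  | nil => simp at hl
  | cons h ih => exact List.Lex.cons (ih (by simpa using hl))
  | rel h => exact List.Lex.rel h

theorem lex_asymm_aux {V : Type*} [LinearOrder V] {a b : List V}
    (h : List.Lex (· < ·) a b) (h' : List.Lex (· < ·) b a) : False := by
  have h1 : a < b := h
  have h2 : b < a := h'
  exact lt_asymm h1 h2

theorem isWalk_split_aux {V : Type*} {E : V → V → Prop} {p σ : List V} {u s t : V} :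
    IsWalk E (p ++ u :: σ) s t ↔ IsWalk E (p ++ [u]) s u ∧ IsWalk E (u :: σ) u t := by
  unfold IsWalk
  have hc : (p ++ u :: σ).IsChain E ↔ (p ++ [u]).IsChain E ∧ (u :: σ).IsChain E :=
    List.isChain_split
  have hh : (p ++ u :: σ).head? = (p ++ [u]).head? := by cases p <;> simp
  have hg : (p ++ u :: σ).getLast? = (u :: σ).getLast? := by
    simp [List.getLast?_append, List.getLast?_cons]
  change _ ∧ _ ∧ _ ∧ (p ++ u :: σ).IsChain E ↔
    (_ ∧ _ ∧ _ ∧ (p ++ [u]).IsChain E) ∧ (_ ∧ _ ∧ _ ∧ (u :: σ).IsChain E)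
  rw [hc, hh, hg]
  simp
  tauto

theorem isWalk_end_aux {V : Type*} {E : V → V → Prop} {l : List V} {s u : V}
    (h : IsWalk E l s u) : ∃ p, l = p ++ [u] := by
  obtain ⟨h0, h1, h2, h3⟩ := h
  exact List.getLast?_eq_some_iff.1 h2

/-- Suppose all shortest walks between any reachable pair have the same
number of edges, and for each `t` reachable from `s` let `lam t` be the lexicographically
smallest shortest walk from `s` to `t` (given by hypothesis; its uniqueness is part of the
conclusion).  Then every prefix of `lam t` ending at a node `u` equals `lam u`; in
particular `lam s = [s]` and there is a predecessor function `pred` with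
`lam t = lam (pred t) ++ [t]` for every reachable `t ≠ s`, so the predecessor edges form a
tree rooted at `s` whose root-to-`t` path is `lam t`. -/
theorem stmt12 {V : Type} [Fintype V] [LinearOrder V]
    (E : V → V → Prop) (w : V → V → ℝ) (hw : ∀ u z, E u z → 0 ≤ w u z)
    (hsame : ∀ (a b : V) (l₁ l₂ : List V),
      IsShortestWalk E w a b l₁ → IsShortestWalk E w a b l₂ → l₁.length = l₂.length)
    (s : V) (lam : V → List V)
    (hlam : ∀ t : V, (∃ l, IsWalk E l s t) →
      IsShortestWalk E w s t (lam t) ∧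
      ∀ l, IsShortestWalk E w s t l → lam t = l ∨ List.Lex (· < ·) (lam t) l) :
    -- `lam t` is the unique lexicographically smallest shortest walk
    (∀ t : V, (∃ l, IsWalk E l s t) →
      ∀ l, (IsShortestWalk E w s t l ∧
          ∀ l', IsShortestWalk E w s t l' → l = l' ∨ List.Lex (· < ·) l l') →
        l = lam t) ∧
    -- every prefix of `lam t` ending at `u` equals `lam u`
    (∀ t : V, (∃ l, IsWalk E l s t) →
      ∀ (ρ : List V) (u : V), ρ <+: lam t → ρ.getLast? = some u → ρ = lam u) ∧
    -- the predecessor edges form a tree rooted at `s` whose root-to-`t` path is `lam t`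
    (lam s = [s]) ∧
    (∃ pred : V → V, ∀ t : V, (∃ l, IsWalk E l s t) → t ≠ s →
      lam t = lam (pred t) ++ [t]) := by
  have hpre : ∀ t : V, (∃ l, IsWalk E l s t) →
      ∀ (ρ : List V) (u : V), ρ <+: lam t → ρ.getLast? = some u → ρ = lam u := by
    intro t ht ρ u hρ hu
    obtain ⟨p, rfl⟩ := List.getLast?_eq_some_iff.1 hu
    obtain ⟨σ, hσ⟩ := hρ
    obtain ⟨⟨hwalk, hmin⟩, hlex⟩ := hlam t ht
    have hσ' : lam t = p ++ u :: σ := by rw [← hσ]; simp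
    rw [hσ'] at hwalk hmin hlex
    obtain ⟨hw1, hw2⟩ := isWalk_split_aux.1 hwalk
    have hsh : IsShortestWalk E w s u (p ++ [u]) := by
      refine ⟨hw1, fun l' hl' => ?_⟩
      obtain ⟨q, rfl⟩ := isWalk_end_aux hl'
      have h1 := hmin _ (isWalk_split_aux.2 ⟨hl', hw2⟩)
      rw [walkLen_append_aux, walkLen_append_aux w q] at h1
      linarith
    obtain ⟨hshu, hlexu⟩ := hlam u ⟨_, hw1⟩
    rcases hlexu _ hsh with h | h
    · exact h.symm
    · exfalso
      have hlen := hsame _ _ _ _ hshu hsh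
      have hL := lex_append_aux _ _ σ hlen h
      obtain ⟨q, hq⟩ := isWalk_end_aux hshu.1
      rw [hq] at hL hshu
      simp only [List.append_assoc, List.singleton_append] at hL
      have hshq : IsShortestWalk E w s t (q ++ u :: σ) := by
        refine ⟨isWalk_split_aux.2 ⟨hshu.1, hw2⟩, fun l' hl' => ?_⟩
        have h1 := hmin l' hl'
        have h2 := hshu.2 _ hw1
        rw [walkLen_append_aux] at h1 ⊢
        linarith
      rcases hlex _ hshq with h3 | h3
      · rw [h3] at hL
        exact lex_asymm_aux hL hL
      · exact lex_asymm_aux hL h3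
  refine ⟨?_, hpre, ?_, ?_⟩
  · rintro t ht l ⟨hl, hl'⟩
    obtain ⟨h1, h2⟩ := hlam t ht
    rcases h2 l hl with h | h
    · exact h.symm
    · rcases hl' _ h1 with h' | h'
      · exact h'
      · exact (lex_asymm_aux h h').elim
  · have hs : IsWalk E [s] s s := ⟨by simp, by simp, by simp, List.isChain_singleton s⟩
    obtain ⟨h1, -⟩ := hlam s ⟨_, hs⟩
    have hp : [s] <+: lam s := by
      have h2 := h1.1.2.1
      obtain ⟨ys, hys⟩ := List.head?_eq_some_iff.1 h2
      exact ⟨ys, by simp [hys]⟩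
    exact (hpre s ⟨_, hs⟩ [s] s hp (by simp)).symm
  · refine ⟨fun t => ((lam t).dropLast.getLast?).getD t, fun t ht hts => ?_⟩
    obtain ⟨h1, -⟩ := hlam t ht
    obtain ⟨p, hp⟩ := isWalk_end_aux h1.1
    have hh := h1.1.2.1
    have hpn : p ≠ [] := by
      rintro rfl
      rw [hp] at hh
      exact hts (by simpa using hh)
    have hpl : p.getLast? = some (p.getLast hpn) := List.getLast?_eq_some_getLast hpn
    have := hpre t ht p _ ⟨[t], hp.symm⟩ hpl
    have hd : ((lam t).dropLast.getLast?).getD t = p.getLast hpn := by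
      rw [hp, List.dropLast_concat, hpl]; rfl
    simp only [hd]
    rw [← this, hp]
end
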